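/- arXiv:2012.10742 — 6 statements merged into one kernel-verified Lean document; each statement's English description precedes it below -/
import Mathlib

section
/- For every natural number n and permutations σ, τ of an n-element set, σ and τ are conjugate in Sym(n) if and only if the characteristic polynomials (over ℚ) of their permutation matrices are equal. In other words, the map from conjugacy classes of Sym(n) to characteristic polynomials of the permutation representation is injective. -/
open Polynomial

/-- The permutation matrix of `σ` over `ℚ`: the `(i,j)` entry is `1` if `σ j = i`, else `0`. -/
def permMatrixQ {n : ℕ} (σ : Equiv.Perm (Fin n)) : Matrix (Fin n) (Fin n) ℚ :=
  fun i j => if σ j = i then 1 else 0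

lemma pmq_mul {n : ℕ} (σ τ : Equiv.Perm (Fin n)) :
    permMatrixQ (σ * τ) = permMatrixQ σ * permMatrixQ τ := by
  ext i j
  simp [permMatrixQ, Matrix.mul_apply]
  congr

lemma pmq_one {n : ℕ} : permMatrixQ (1 : Equiv.Perm (Fin n)) = 1 := by
  ext i j
  simp [permMatrixQ, Matrix.one_apply, eq_comm]

lemma pmq_pow {n : ℕ} (σ : Equiv.Perm (Fin n)) (k : ℕ) :
    permMatrixQ (σ ^ k) = permMatrixQ σ ^ k := by
  induction k with
  | zero => simp [pmq_one]
  | succ k ih => rw [pow_succ, pow_succ, pmq_mul, ih]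

lemma pmq_trace {n : ℕ} (σ : Equiv.Perm (Fin n)) :
    (permMatrixQ σ).trace = ((Finset.univ.filter fun x => σ x = x).card : ℚ) := by
  simp [permMatrixQ, Matrix.trace]

lemma det_aeval_eq {n : ℕ} (M N : Matrix (Fin n) (Fin n) ℂ) (h : M.charpoly = N.charpoly)
    (p : ℂ[X]) : (aeval M p).det = (aeval N p).det := by
  have key : ∀ (A : Matrix (Fin n) (Fin n) ℂ) (r : ℂ),
      (aeval A (X - C r)).det = (-1) ^ n * A.charpoly.eval r := by
    intro A r
    rw [Matrix.eval_charpoly]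
    have : aeval A (X - C r) = - (Matrix.scalar (Fin n) r - A) := by
      simp [Matrix.algebraMap_eq_diagonal, Matrix.scalar_apply]
    rw [this, Matrix.det_neg]
    simp
  rw [(IsAlgClosed.splits p).eq_prod_roots]
  simp only [map_mul, Matrix.det_mul, aeval_C]
  congr 1
  induction p.roots using Multiset.induction_on with
  | empty => simp
  | cons a s ih =>
    simp only [Multiset.map_cons, Multiset.prod_cons, map_mul, Matrix.det_mul, key, h] at ih ⊢
    rw [ih]

lemma charpoly_pow_eq {n : ℕ} (M N : Matrix (Fin n) (Fin n) ℂ) (h : M.charpoly = N.charpoly)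
    (k : ℕ) : (M ^ k).charpoly = (N ^ k).charpoly := by
  apply Polynomial.funext
  intro y
  rw [Matrix.eval_charpoly, Matrix.eval_charpoly]
  have := det_aeval_eq M N h (C y - X ^ k)
  simpa [Matrix.algebraMap_eq_diagonal, Matrix.scalar_apply, Pi.algebraMap_def] using this

lemma trace_pow_eq {n : ℕ} (M N : Matrix (Fin n) (Fin n) ℚ) (h : M.charpoly = N.charpoly)
    (k : ℕ) : (M ^ k).trace = (N ^ k).trace := by
  let f := algebraMap ℚ ℂ
  have h1 : (M.map f).charpoly = (N.map f).charpoly := by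
    rw [Matrix.charpoly_map, Matrix.charpoly_map, h]
  have h2 := charpoly_pow_eq _ _ h1 k
  have e : ∀ A : Matrix (Fin n) (Fin n) ℚ, (A.map f) ^ k = (A ^ k).map f := by
    intro A
    exact (map_pow f.mapMatrix A k).symm
  rw [e, e, Matrix.charpoly_map, Matrix.charpoly_map] at h2
  have h3 := Polynomial.map_injective f f.injective h2
  rcases Nat.eq_zero_or_pos n with rfl | hn
  · simp [Matrix.trace]
  · haveI : Nonempty (Fin n) := ⟨⟨0, hn⟩⟩
    rw [Matrix.trace_eq_neg_charpoly_coeff, Matrix.trace_eq_neg_charpoly_coeff, h3]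

/-- period of a point -/
noncomputable def pper {n : ℕ} (σ : Equiv.Perm (Fin n)) (x : Fin n) : ℕ := Function.minimalPeriod σ x

lemma pper_dvd {n : ℕ} (σ : Equiv.Perm (Fin n)) (x : Fin n) (k : ℕ) :
    (σ ^ k) x = x ↔ pper σ x ∣ k := by
  rw [pper, ← Function.isPeriodicPt_iff_minimalPeriod_dvd, Function.IsPeriodicPt,
    Function.IsFixedPt, Equiv.Perm.iterate_eq_pow]

lemma pper_card {n : ℕ} (σ : Equiv.Perm (Fin n)) (x : Fin n) (hx : σ x ≠ x) :
    pper σ x = (σ.cycleOf x).support.card := by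
  have hc := σ.isCycle_cycleOf hx
  rw [← hc.orderOf]
  apply Nat.dvd_right_iff_eq.mp
  intro k
  rw [← pper_dvd, orderOf_dvd_iff_pow_eq_one, hc.pow_eq_one_iff' (x := x) (by simpa using hx),
    Equiv.Perm.cycleOf_pow_apply_self]

lemma card_pper {n : ℕ} (σ : Equiv.Perm (Fin n)) (d : ℕ) (hd : 2 ≤ d) :
    (Finset.univ.filter fun x => pper σ x = d).card = σ.cycleType.count d * d := by
  have hs : ∀ x, pper σ x = d → σ x ≠ x := by
    intro x hx h
    have := (pper_dvd σ x 1).1 (by simpa using h)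
    rw [hx, Nat.dvd_one] at this
    omega
  rw [Finset.card_eq_sum_card_fiberwise (f := σ.cycleOf)
    (t := σ.cycleFactorsFinset.filter fun c => c.support.card = d)]
  · rw [Finset.sum_congr rfl (g := fun _ => d), Finset.sum_const, smul_eq_mul]
    · congr 1
      rw [Equiv.Perm.cycleType_def, Multiset.count_map]
      rw [← Finset.filter_val, Finset.card_val]
      congr 1
      ext c
      simp [eq_comm]
    · intro c hc
      rw [Finset.mem_filter] at hc
      rw [← hc.2]
      congr 1
      ext x
      simp only [Finset.mem_filter, Finset.mem_univ, true_and]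
      rw [eq_comm (b := c), Equiv.Perm.eq_cycleOf_of_mem_cycleFactorsFinset_iff _ _ hc.1]
      refine ⟨fun h => h.2, fun h => ⟨?_, h⟩⟩
      have h1 := Equiv.Perm.cycle_is_cycleOf h hc.1
      have h2 : σ x ≠ x := by
        simpa using Equiv.Perm.mem_cycleFactorsFinset_support_le hc.1 h
      rw [pper_card σ x h2, ← h1]
  · intro x hx
    have hx' : pper σ x = d := by simpa using hx
    have h2 := hs x hx'
    simp only [Finset.coe_filter, Set.mem_setOf_eq]
    rw [Equiv.Perm.cycleOf_mem_cycleFactorsFinset_iff, ← pper_card σ x h2]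
    exact ⟨by simpa using h2, hx'⟩

lemma card_fix {n : ℕ} (σ : Equiv.Perm (Fin n)) (k : ℕ) (hk : k ≠ 0) :
    (Finset.univ.filter fun x => (σ ^ k) x = x).card =
      ∑ d ∈ k.divisors, (Finset.univ.filter fun x => pper σ x = d).card := by
  rw [Finset.card_eq_sum_card_fiberwise (f := pper σ) (t := k.divisors)]
  · apply Finset.sum_congr rfl
    intro d hd
    congr 1
    ext x
    simp only [Finset.mem_filter, Finset.mem_univ, true_and, pper_dvd]
    refine ⟨fun h => h.2, fun h => ⟨h ▸ Nat.dvd_of_mem_divisors hd, h⟩⟩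
  · intro x hx
    have hx' : (σ ^ k) x = x := by simpa using hx
    simpa [hk] using (pper_dvd σ x k).1 hx'

/-- Two permutations in `Sym(n)` are conjugate if and only if the characteristic polynomials
(over `ℚ`) of their permutation matrices coincide; i.e. the map from conjugacy classes to
characteristic polynomials of the permutation representation is injective. -/
theorem isConj_iff_charpoly_permMatrix_eq {n : ℕ} (σ τ : Equiv.Perm (Fin n)) :
    IsConj σ τ ↔ (permMatrixQ σ).charpoly = (permMatrixQ τ).charpoly := by
  constructor
  · intro h
    obtain ⟨c, rfl⟩ := isConj_iff.1 h
    rw [pmq_mul, Matrix.charpoly_mul_comm, ← pmq_mul]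
    congr 2
    group
  · intro h
    rw [Equiv.Perm.isConj_iff_cycleType_eq]
    have hfix : ∀ k, (Finset.univ.filter fun x => (σ ^ k) x = x).card =
        (Finset.univ.filter fun x => (τ ^ k) x = x).card := by
      intro k
      have := trace_pow_eq _ _ h k
      rw [← pmq_pow, ← pmq_pow, pmq_trace, pmq_trace] at this
      exact_mod_cast this
    have hper : ∀ d, d ≠ 0 → (Finset.univ.filter fun x => pper σ x = d).card =
        (Finset.univ.filter fun x => pper τ x = d).card := by
      intro d
      induction d using Nat.strong_induction_on with
      | _ d ih =>
        intro hd
        have h1 := hfix d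
        rw [card_fix σ d hd, card_fix τ d hd, ← Nat.insert_self_properDivisors hd,
          Finset.sum_insert (by simp), Finset.sum_insert (by simp)] at h1
        rw [Finset.sum_congr rfl (s₁ := d.properDivisors)
          (g := fun d => (Finset.univ.filter fun x => pper τ x = d).card)] at h1
        · omega
        · intro e he
          exact ih e (Nat.mem_properDivisors.1 he).2 (Nat.pos_of_mem_properDivisors he).ne'
    ext d
    by_cases hd : 2 ≤ d
    · have := hper d (by omega)
      rw [card_pper σ d hd, card_pper τ d hd] at this
      exact Nat.eq_of_mul_eq_mul_right (by omega) this
    · rw [Multiset.count_eq_zero_of_notMem, Multiset.count_eq_zero_of_notMem]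
      · exact fun h => hd (Equiv.Perm.two_le_of_mem_cycleType h)
      · exact fun h => hd (Equiv.Perm.two_le_of_mem_cycleType h)
end

section
/- Let n ≥ 1 and let σ be a permutation of an n-element set. Write the characteristic polynomial over ℚ of the permutation matrix of σ as P(X) = (X − 1)·S(X), where S is a monic polynomial of degree n − 1. Then the reverse of S (the polynomial with the coefficient sequence written in reverse order) equals (−1)^{n−1} · sign(σ) · S. Equivalently, writing S(X) = X^{n−1} − s_1 X^{n−2} + ... + (−1)^{n−1} s_{n−1}, the coefficients satisfy s_{n−1} = sign(σ), s_{n−1}² = 1, and s_k · s_{n−1} = s_{n−1−k} for all 0 ≤ k ≤ n−1 (with s_0 = 1). -/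
open Polynomial

lemma permMatrixQ_eq {n : ℕ} (σ : Equiv.Perm (Fin n)) :
    permMatrixQ σ = (σ.permMatrix ℚ).transpose := by
  ext i j
  simp [permMatrixQ, PEquiv.toMatrix_apply, eq_comm]

lemma permMatrixQ_det {n : ℕ} (σ : Equiv.Perm (Fin n)) :
    (permMatrixQ σ).det = ((Equiv.Perm.sign σ : ℤ) : ℚ) := by
  rw [permMatrixQ_eq, Matrix.det_transpose, Matrix.det_permutation]

lemma permMatrixQ_mul {n : ℕ} (σ : Equiv.Perm (Fin n)) :
    permMatrixQ σ * (permMatrixQ σ).transpose = 1 := by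
  ext i j
  simp only [Matrix.mul_apply, Matrix.transpose_apply, permMatrixQ, Matrix.one_apply]
  rw [Finset.sum_eq_single (σ.symm i)]
  · simp
  · intro b _ hb
    have : σ b ≠ i := fun h => hb (by simp [← h])
    simp [this]
  · simp

lemma sign_sq_q {n : ℕ} (σ : Equiv.Perm (Fin n)) :
    ((Equiv.Perm.sign σ : ℤ) : ℚ) * ((Equiv.Perm.sign σ : ℤ) : ℚ) = 1 := by
  rcases Int.units_eq_one_or (Equiv.Perm.sign σ) with h | h <;> simp [h]

lemma permMatrixQ_charpoly {n : ℕ} (σ : Equiv.Perm (Fin n)) :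
    (permMatrixQ σ).charpoly =
      (-1) ^ n * C ((Equiv.Perm.sign σ : ℤ) : ℚ) * (permMatrixQ σ).charpoly.reverse := by
  have hinv : (permMatrixQ σ)⁻¹ = (permMatrixQ σ).transpose :=
    Matrix.inv_eq_right_inv (permMatrixQ_mul σ)
  have hu : IsUnit (permMatrixQ σ) := 
    (Matrix.isUnit_iff_isUnit_det _).2 (by
      rw [permMatrixQ_det]; exact IsUnit.of_mul_eq_one _ (sign_sq_q σ))
  have h := Matrix.charpoly_inv (permMatrixQ σ) hu
  rw [hinv, Matrix.charpoly_transpose, permMatrixQ_det, Ring.inverse_eq_inv',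
    inv_eq_of_mul_eq_one_left (sign_sq_q σ), ← Matrix.reverse_charpoly, Fintype.card_fin] at h
  exact h

/-- Let `n ≥ 1`, `σ ∈ Sym(n)`, and write the characteristic polynomial of the permutation
matrix of `σ` as `P = (X - 1) * S` with `S` monic of degree `n - 1`.  Then the reverse of
`S` equals `(-1)^(n-1) * sign σ * S`.  Equivalently, with
`S = X^{n-1} - s₁ X^{n-2} + ⋯ + (-1)^{n-1} s_{n-1}` (so `s_k = (-1)^k * coeff S (n-1-k)`),
one has `s_{n-1} = sign σ`, `s_{n-1}² = 1`, and `s_k * s_{n-1} = s_{n-1-k}` for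
`0 ≤ k ≤ n - 1`. -/
theorem reverse_standard_charpoly {n : ℕ} (hn : 1 ≤ n) (σ : Equiv.Perm (Fin n))
    (S : Polynomial ℚ) (hS : S.Monic) (hdeg : S.natDegree = n - 1)
    (hP : (permMatrixQ σ).charpoly = (X - 1) * S)
    (s : ℕ → ℚ) (hs : ∀ k, s k = (-1 : ℚ) ^ k * S.coeff (n - 1 - k)) :
    S.reverse = ((-1 : ℚ) ^ (n - 1) * ((Equiv.Perm.sign σ : ℤ) : ℚ)) • S ∧
    s (n - 1) = ((Equiv.Perm.sign σ : ℤ) : ℚ) ∧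
    s (n - 1) ^ 2 = 1 ∧
    ∀ k ≤ n - 1, s k * s (n - 1) = s (n - 1 - k) := by
  have he := sign_sq_q σ
  have hc := permMatrixQ_charpoly σ
  generalize ((Equiv.Perm.sign σ : ℤ) : ℚ) = e at *
  obtain ⟨m, rfl⟩ : ∃ m, n = m + 1 := ⟨n - 1, by omega⟩
  simp only [Nat.add_sub_cancel] at *
  have hpm : ((-1 : ℚ) ^ m) * (-1) ^ m = 1 := by rw [← mul_pow]; simp
  have hr1 : (X - 1 : ℚ[X]).reverse = -(X - 1) := by
    have hd : (X - 1 : ℚ[X]).natDegree = 1 := by simpa using natDegree_X_sub_C (1 : ℚ)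
    have h1 : (1 : ℚ[X]) = C 1 := by simp
    rw [reverse, hd, reflect_sub, reflect_one_X, h1, reflect_C]
    simp
  rw [hP, reverse_mul_of_domain, hr1] at hc
  have hne : (X - 1 : ℚ[X]) ≠ 0 := by simpa using X_sub_C_ne_zero (1 : ℚ)
  have hSr : S = C ((-1) ^ m * e) * S.reverse := by
    apply mul_left_cancel₀ hne
    rw [hc]
    simp only [map_mul, map_pow, map_neg, map_one]
    ring
  have hmul : ((-1 : ℚ) ^ m * e) * ((-1) ^ m * e) = 1 := by linear_combination e * e * hpm + he
  have hrev : S.reverse = ((-1 : ℚ) ^ m * e) • S := by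
    conv_rhs => rw [hSr]
    rw [smul_eq_C_mul, ← mul_assoc, ← C_mul, hmul, C_1, one_mul]
  have hco : ∀ k ≤ m, S.coeff (m - k) = (-1) ^ m * e * S.coeff k := by
    intro k hk
    have := congrArg (fun p => coeff p k) hrev
    simpa [coeff_reverse, hdeg, revAt_le hk, mul_assoc] using this
  have hSm : S.coeff m = 1 := by rw [← hdeg]; exact hS
  have h0 : S.coeff 0 = (-1) ^ m * e := by simpa [hSm] using hco m le_rfl
  have hsm : s m = e := by
    rw [hs, Nat.sub_self, h0]; linear_combination e * hpm
  refine ⟨hrev, hsm, by rw [hsm, sq, he], fun k hk => ?_⟩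
  rw [hsm, hs, hs, hco k hk, Nat.sub_sub_self hk]
  obtain ⟨d, rfl⟩ := Nat.exists_eq_add_of_le hk
  have hk1 : ((-1 : ℚ) ^ k) * (-1) ^ k = 1 := by rw [← mul_pow]; simp
  rw [Nat.add_sub_cancel_left, pow_add]
  linear_combination (-1) ^ d * S.coeff k * (e * e * hk1 + he)
end

section
/- Let G be a finite group, let χ be the character of a finite-dimensional complex representation of G, let g ∈ G with g^m = 1, and let ζ ∈ ℂ be a primitive m-th root of unity. Then χ(g) lies in the subfield ℚ(ζ) of ℂ, and for every integer k coprime to m and every field automorphism φ of ℚ(ζ) over ℚ with φ(ζ) = ζ^k, one has φ(χ(g)) = χ(g^k). That is, the Galois action σ(k) on character values satisfies χ^{σ(k)}(𝒞(g)) = χ(𝒞(g^k)). -/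
open IntermediateField

theorem trace_pow_decomp {V : Type*} [AddCommGroup V] [Module ℂ V] [FiniteDimensional ℂ V]
    (f : Module.End ℂ V) (m : ℕ) (hm : 0 < m) (hf : f ^ m = 1) :
    ∃ (s : Finset ℂ) (d : ℂ → ℕ), (∀ μ ∈ s, μ ^ m = 1) ∧
      ∀ k : ℕ, LinearMap.trace ℂ V (f ^ k) = ∑ μ ∈ s, (d μ : ℂ) * μ ^ k := by
  classical
  have hss : f.IsSemisimple := by
    refine Module.End.isSemisimple_of_squarefree_aeval_eq_zero
      (p := (Polynomial.X ^ m - 1 : Polynomial ℂ)) ?_ ?_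
    · exact (Polynomial.X_pow_sub_one_separable_iff.2
        (by exact_mod_cast hm.ne')).squarefree
    · simp [hf]
  have hpow : ∀ (μ : ℂ) (k : ℕ) (x : V), x ∈ f.eigenspace μ → (f ^ k) x = μ ^ k • x := by
    intro μ k x hx
    rw [Module.End.mem_eigenspace_iff] at hx
    induction k with
    | zero => simp
    | succ k ih => rw [pow_succ, Module.End.mul_apply, hx, map_smul, ih, smul_smul, pow_succ']
  have hint : DirectSum.IsInternal (fun μ : ℂ => f.eigenspace μ) :=
    DirectSum.isInternal_submodule_of_iSupIndep_of_iSup_eq_top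
      f.eigenspaces_iSupIndep hss.iSup_eigenspace_eq_top
  have hN : {μ : ℂ | f.eigenspace μ ≠ ⊥}.Finite :=
    WellFoundedGT.finite_ne_bot_of_iSupIndep f.eigenspaces_iSupIndep
  refine ⟨hN.toFinset, fun μ => Module.finrank ℂ (f.eigenspace μ), ?_, ?_⟩
  · intro μ hμ
    rw [Set.Finite.mem_toFinset] at hμ
    obtain ⟨x, hx, hx0⟩ := (Submodule.ne_bot_iff _).mp hμ
    have h := hpow μ m x hx
    rw [hf, Module.End.one_apply] at h
    have h2 : (μ ^ m - 1) • x = 0 := by rw [sub_smul, ← h, one_smul, sub_self]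
    exact sub_eq_zero.1 ((smul_eq_zero.1 h2).resolve_right hx0)
  · intro k
    have hmap : ∀ μ : ℂ, Set.MapsTo (f ^ k) (f.eigenspace μ) (f.eigenspace μ) := by
      intro μ x hx
      rw [SetLike.mem_coe, hpow μ k x hx]
      exact Submodule.smul_mem _ _ hx
    rw [LinearMap.trace_eq_sum_trace_restrict' hint hN hmap]
    refine Finset.sum_congr rfl fun μ _ => ?_
    have : (f ^ k).restrict (hmap μ) = μ ^ k • (LinearMap.id) := by
      ext x
      exact hpow μ k x x.2
    rw [this, map_smul, LinearMap.trace_id, smul_eq_mul, mul_comm]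

/-- Let `χ` be the character of a finite-dimensional complex representation of a finite
group `G`, let `g ∈ G` with `g^m = 1`, and let `ζ` be a primitive `m`-th root of unity
in `ℂ`.  Then `χ(g) ∈ ℚ(ζ)`, and for every `k` coprime to `m` and every automorphism `φ`
of `ℚ(ζ)/ℚ` with `φ(ζ) = ζ^k`, one has `φ(χ(g)) = χ(g^k)`. -/
theorem galois_action_on_character_values {G : Type} [Group G] [Fintype G]
    (V : FDRep ℂ G) (g : G) (m : ℕ) (hm : 0 < m) (hg : g ^ m = 1)
    (ζ : ℂ) (hζ : IsPrimitiveRoot ζ m) :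
    ∃ h : V.character g ∈ ℚ⟮ζ⟯,
      ∀ k : ℕ, Nat.Coprime k m →
        ∀ φ : ℚ⟮ζ⟯ ≃ₐ[ℚ] ℚ⟮ζ⟯,
          (φ ⟨ζ, mem_adjoin_simple_self ℚ ζ⟩ : ℂ) = ζ ^ k →
          (φ ⟨V.character g, h⟩ : ℂ) = V.character (g ^ k) := by
  obtain ⟨s, d, hs, htr⟩ := trace_pow_decomp (V.ρ g) m hm (by rw [← map_pow, hg, map_one])
  have hchar : ∀ k : ℕ, V.character (g ^ k) = ∑ μ ∈ s, (d μ : ℂ) * μ ^ k := by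
    intro k
    rw [← htr k, ← map_pow]
    rfl
  have hex : ∀ μ : ℂ, ∃ i : ℕ, μ ∈ s → ζ ^ i = μ := by
    intro μ
    by_cases h : μ ∈ s
    · haveI : NeZero m := ⟨hm.ne'⟩
      obtain ⟨i, -, hi⟩ := hζ.eq_pow_of_pow_eq_one (hs μ h)
      exact ⟨i, fun _ => hi⟩
    · exact ⟨0, fun h' => absurd h' h⟩
  choose e he using hex
  let z : ℚ⟮ζ⟯ := ⟨ζ, mem_adjoin_simple_self ℚ ζ⟩
  have hval : V.character g = ((∑ μ ∈ s, (d μ : ℚ⟮ζ⟯) * z ^ e μ : ℚ⟮ζ⟯) : ℂ) := by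
    have h1 := hchar 1
    rw [pow_one] at h1
    rw [h1]
    push_cast
    refine Finset.sum_congr rfl fun μ hμ => ?_
    rw [pow_one, he μ hμ]
  have hmem : V.character g ∈ ℚ⟮ζ⟯ := by rw [hval]; exact Subtype.property _
  refine ⟨hmem, fun k _ φ hφ => ?_⟩
  have heq : (⟨V.character g, hmem⟩ : ℚ⟮ζ⟯) = ∑ μ ∈ s, (d μ : ℚ⟮ζ⟯) * z ^ e μ :=
    Subtype.ext hval
  rw [heq, hchar k]
  simp only [map_sum, map_mul, map_pow, map_natCast]
  push_cast
  refine Finset.sum_congr rfl fun μ hμ => ?_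
  rw [show ((φ z : ℚ⟮ζ⟯) : ℂ) = ζ ^ k from hφ, ← pow_mul, mul_comm k, pow_mul, he μ hμ]
end

section
/- Let F be a finite field with q elements, let f ∈ F[X] be a squarefree polynomial of positive degree, and let K be a splitting field of f over F. The q-power Frobenius map x ↦ x^q is an F-algebra automorphism of K permuting the set of roots of f in K, and the multiset of sizes of the orbits of this permutation on the roots of f equals the multiset of degrees of the monic irreducible factors of f in F[X]. In other words, the factorization type of f equals the cycle type of Frobenius acting on the roots of f. -/
open Polynomial

theorem partition_parts_aux {α β : Type*} [Fintype α] [DecidableEq α]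
    (σ : Equiv.Perm α) (m : α → β) (hm : ∀ x y, m x = m y ↔ σ.SameCycle x y)
    (s : Multiset β) (hs : s.Nodup) (hmem : ∀ b, b ∈ s ↔ ∃ x, m x = b)
    (d : β → ℕ) (hd : ∀ x, d (m x) = Nat.card {y // m y = m x}) :
    σ.partition.parts = s.map d := by
  classical
  have hd' : ∀ x, d (m x) = (Finset.univ.filter (fun y => σ.SameCycle x y)).card := by
    intro x
    rw [hd, Nat.card_eq_fintype_card, Fintype.card_subtype]
    congr 1
    ext y
    simp [hm, Equiv.Perm.sameCycle_comm]
  rw [Equiv.Perm.parts_partition, Equiv.Perm.cycleType_def,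
    ← Multiset.filter_add_not (fun b => ∃ x ∈ σ.support, m x = b) s, Multiset.map_add]
  congr 1
  · have hne : ∀ c ∈ σ.cycleFactorsFinset.val, ∃ x, x ∈ c.support := fun c hc =>
      (Equiv.Perm.mem_cycleFactorsFinset_iff.mp hc).1.nonempty_support
    choose r hr using hne
    have hco : ∀ c hc, c = σ.cycleOf (r c hc) := fun c hc =>
      Equiv.Perm.cycle_is_cycleOf (hr c hc) hc
    have hrs : ∀ c hc, r c hc ∈ σ.support := fun c hc =>
      Equiv.Perm.mem_cycleFactorsFinset_support_le hc (hr c hc)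
    refine Multiset.map_eq_map_of_bij_of_nodup _ _ σ.cycleFactorsFinset.nodup (hs.filter _)
      (fun c hc => m (r c hc)) ?_ ?_ ?_ ?_
    · intro c hc
      exact Multiset.mem_filter.mpr ⟨(hmem _).2 ⟨_, rfl⟩, _, hrs c hc, rfl⟩
    · intro c hc c' hc' h
      rw [hco c hc, hco c' hc']
      exact ((hm _ _).1 h).cycleOf_eq
    · intro b hb
      obtain ⟨-, x, hx, rfl⟩ := Multiset.mem_filter.mp hb
      have hc := Equiv.Perm.cycleOf_mem_cycleFactorsFinset_iff.mpr hx
      refine ⟨σ.cycleOf x, hc, ?_⟩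
      have := hr _ hc
      rw [Equiv.Perm.mem_support_cycleOf_iff] at this
      exact (hm _ _).2 this.1.symm
    · intro c hc
      rw [hd']
      conv_lhs => rw [hco c hc]
      simp only [Function.comp]
      congr 1
      ext y
      rw [Equiv.Perm.mem_support_cycleOf_iff]
      simp only [hrs c hc, and_true, Finset.mem_filter, Finset.mem_univ, true_and]
  · rw [← Finset.card_compl, Finset.card, ← Multiset.map_const']
    have hfix : ∀ x, x ∉ σ.support → ∀ y, σ.SameCycle x y ↔ x = y := by
      intro x hx y
      rw [Equiv.Perm.notMem_support] at hx
      constructor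
      · rintro ⟨n, rfl⟩
        exact (Equiv.Perm.zpow_apply_eq_self_of_apply_eq_self hx n).symm
      · rintro rfl
        exact Equiv.Perm.SameCycle.refl _ _
    refine Multiset.map_eq_map_of_bij_of_nodup _ _ (Finset.nodup _) (hs.filter _)
      (fun x _ => m x) ?_ ?_ ?_ ?_
    · intro x hx
      have hx' : x ∉ σ.support := Finset.mem_compl.mp hx
      refine Multiset.mem_filter.mpr ⟨(hmem _).2 ⟨_, rfl⟩, ?_⟩
      rintro ⟨y, hy, h⟩
      rw [eq_comm, hm, hfix x hx'] at h
      exact hx' (h ▸ hy)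
    · intro x hx y hy h
      exact (hfix x (Finset.mem_compl.mp hx) y).1 ((hm _ _).1 h)
    · intro b hb
      obtain ⟨hb1, hb2⟩ := Multiset.mem_filter.mp hb
      obtain ⟨x, rfl⟩ := (hmem b).1 hb1
      exact ⟨x, Finset.mem_compl.mpr (fun h => hb2 ⟨x, h, rfl⟩), rfl⟩
    · intro x hx
      rw [hd']
      simp only [hfix x (Finset.mem_compl.mp hx)]
      simp [Finset.filter_eq]

/-- Let `F` be a finite field with `q` elements, `f ∈ F[X]` squarefree of positive degree,
and `K` a splitting field of `f` over `F`.  The `q`-power Frobenius is an `F`-algebra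
automorphism of `K` which permutes the roots of `f` in `K`, and the multiset of orbit
sizes of this permutation of the roots equals the multiset of degrees of the monic
irreducible factors of `f` in `F[X]`: the factorization type of `f` is the cycle type of
Frobenius acting on the roots. -/
theorem factorization_type_eq_frobenius_cycle_type
    {F K : Type} [Field F] [Fintype F] [DecidableEq F] [Field K] [DecidableEq K] [Algebra F K]
    (q : ℕ) (hq : Fintype.card F = q)
    (f : F[X]) (hsq : Squarefree f) (hdeg : 0 < f.natDegree)
    [Polynomial.IsSplittingField F K f] :
    (∃ φ : K ≃ₐ[F] K, ∀ x : K, φ x = x ^ q) ∧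
    ∃ σ : Equiv.Perm (f.rootSet K),
      (∀ x : f.rootSet K, (σ x : K) = (x : K) ^ q) ∧
      σ.partition.parts =
        (UniqueFactorizationMonoid.normalizedFactors f).map Polynomial.natDegree := by
  subst hq
  have hf0 : f ≠ 0 := hsq.ne_zero
  have : FiniteDimensional F K := Polynomial.IsSplittingField.finiteDimensional K f
  have : Finite K := Module.finite_of_finite F
  have : Normal F K := Normal.of_isSplittingField f
  let φ : K ≃ₐ[F] K := FiniteField.frobeniusAlgEquivOfAlgebraic F K
  have hφ : ∀ x : K, φ x = x ^ Fintype.card F := fun x => rfl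
  refine ⟨⟨φ, hφ⟩, ?_⟩
  have hmaps : ∀ ψ : K ≃ₐ[F] K, ∀ x ∈ f.rootSet K, ψ x ∈ f.rootSet K := by
    intro ψ x hx
    rw [Polynomial.mem_rootSet] at hx ⊢
    refine ⟨hf0, ?_⟩
    have := Polynomial.aeval_algHom_apply (ψ : K →ₐ[F] K) x f
    simp only [AlgEquiv.coe_toAlgHom] at this
    rw [this, hx.2, map_zero]
  let σ : Equiv.Perm (f.rootSet K) :=
    { toFun := fun x => ⟨φ x, hmaps φ x x.2⟩
      invFun := fun x => ⟨φ.symm x, hmaps φ.symm x x.2⟩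
      left_inv := fun x => Subtype.ext (by simp)
      right_inv := fun x => Subtype.ext (by simp) }
  have hσ : ∀ x : f.rootSet K, (σ x : K) = φ x := fun x => rfl
  have hσpow : ∀ (n : ℕ) (x : f.rootSet K), ((σ ^ n) x : K) = (φ ^ n) x := by
    intro n
    induction n with
    | zero => intro x; simp
    | succ n ih => intro x; rw [pow_succ, pow_succ, Equiv.Perm.mul_apply, ih, hσ]; rfl
  refine ⟨σ, fun x => rfl, ?_⟩
  have hroot : ∀ x : f.rootSet K, aeval (x : K) f = 0 := fun x => (Polynomial.mem_rootSet.1 x.2).2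
  have hint : ∀ x : K, IsIntegral F x := fun x => Algebra.IsIntegral.isIntegral x
  have hsp := Polynomial.IsSplittingField.splits K f
  apply partition_parts_aux σ (fun x => minpoly F (x : K))
  · intro x y
    constructor
    · intro h
      obtain ⟨g, hg⟩ := (Normal.minpoly_eq_iff_mem_orbit K).1 h.symm
      obtain ⟨n, hn⟩ := (FiniteField.bijective_frobeniusAlgEquivOfAlgebraic_pow F K).2 g
      refine ⟨((n : ℕ) : ℤ), ?_⟩
      rw [zpow_natCast]
      apply Subtype.ext
      rw [hσpow, ← hg]
      change (φ ^ (n : ℕ)) x = g x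
      rw [← hn]
    · intro h
      obtain ⟨n, hn⟩ := h.exists_nat_pow_eq
      rw [← hn, hσpow]
      exact (minpoly.algEquiv_eq _ _).symm
  · exact (UniqueFactorizationMonoid.squarefree_iff_nodup_normalizedFactors hf0).1 hsq
  · intro g
    rw [Polynomial.mem_normalizedFactors_iff hf0]
    constructor
    · rintro ⟨hi, hmo, hdv⟩
      have hs : (g.map (algebraMap F K)).Splits :=
        hsp.of_dvd (Polynomial.map_ne_zero hf0) (Polynomial.map_dvd _ hdv)
      obtain ⟨x, hx⟩ := hs.exists_eval_eq_zero (by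
        rw [Polynomial.degree_map]; exact hi.degree_pos.ne')
      rw [Polynomial.eval_map_algebraMap] at hx
      refine ⟨⟨x, Polynomial.mem_rootSet.2 ⟨hf0, ?_⟩⟩, ?_⟩
      · exact Polynomial.aeval_eq_zero_of_dvd_aeval_eq_zero hdv hx
      · exact (minpoly.eq_of_irreducible_of_monic hi hx hmo).symm
    · rintro ⟨x, rfl⟩
      exact ⟨minpoly.irreducible (hint _), minpoly.monic (hint _), minpoly.dvd _ _ (hroot x)⟩
  · intro x
    have hi := minpoly.irreducible (hint x)
    have hdv := minpoly.dvd _ _ (hroot x)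
    rw [← Polynomial.card_rootSet_eq_natDegree (K := K) (PerfectField.separable_of_irreducible hi)
      (hsp.of_dvd (Polynomial.map_ne_zero hf0) (Polynomial.map_dvd _ hdv)),
      ← Nat.card_eq_fintype_card]
    refine Nat.card_congr
      { toFun := fun y => ⟨⟨y, Polynomial.mem_rootSet.2 ⟨hf0, ?_⟩⟩, ?_⟩
        invFun := fun y => ⟨y.1, Polynomial.mem_rootSet.2 ⟨hi.ne_zero, ?_⟩⟩
        left_inv := fun y => rfl
        right_inv := fun y => rfl }
    · exact Polynomial.aeval_eq_zero_of_dvd_aeval_eq_zero hdv (Polynomial.mem_rootSet.1 y.2).2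
    · exact (minpoly.eq_of_irreducible_of_monic hi (Polynomial.mem_rootSet.1 y.2).2
        (minpoly.monic (hint x))).symm
    · obtain ⟨y, hy⟩ := y
      change aeval (y : K) (minpoly F (x : K)) = 0
      rw [← hy]; exact minpoly.aeval _ _
end

section
/- Let D₄ be the subgroup of Sym(4) generated by the 4-cycle (1 2 3 4) and the transposition (1 3). For a permutation σ of 4 elements, define integers s₁, s₂, s₃ by writing the characteristic polynomial over ℚ of its permutation matrix as (X − 1)·(X³ − s₁X² + s₂X − s₃). Then s₁² − s₁ − s₂ − s₃ − 2 = 0 for every σ ∈ D₄, while there exists a permutation σ ∈ Sym(4) (for instance any 3-cycle) with s₁² − s₁ − s₂ − s₃ − 2 ≠ 0. Hence s₁² − s₁ − s₂ − s₃ − 2 lies in the kernel ideal of the restriction of characters from Sym(4) to D₄ but not in the defining ideal of Sym(4), and its vanishing provides a test for D₄. -/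
open Polynomial

theorem blocks_of_mem {σ : Equiv.Perm (Fin 4)}
    (h : σ ∈ Subgroup.closure {finRotate 4, Equiv.swap (0 : Fin 4) 2}) :
    ∀ i, σ (i + 2) = σ i + 2 := by
  induction h using Subgroup.closure_induction with
  | mem x hx =>
    rcases hx with rfl | rfl <;> decide
  | one => intro i; rfl
  | mul x y _ _ hx hy => intro i; simp [Equiv.Perm.mul_apply, hx, hy]
  | inv x _ hx =>
    intro i
    apply x.injective
    rw [hx]; simp

theorem charpoly_eval4 (M : Matrix (Fin 4) (Fin 4) ℚ) (x : ℚ) :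
    M.charpoly.eval x = (Matrix.scalar (Fin 4) x - M).det := Matrix.eval_charpoly M x

theorem det4 (A : Matrix (Fin 4) (Fin 4) ℚ) : A.det =
      A 0 0 * A 1 1 * A 2 2 * A 3 3 - A 0 0 * A 1 1 * A 2 3 * A 3 2
      - A 0 0 * A 1 2 * A 2 1 * A 3 3 + A 0 0 * A 1 2 * A 2 3 * A 3 1
      + A 0 0 * A 1 3 * A 2 1 * A 3 2 - A 0 0 * A 1 3 * A 2 2 * A 3 1
      - A 0 1 * A 1 0 * A 2 2 * A 3 3 + A 0 1 * A 1 0 * A 2 3 * A 3 2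
      + A 0 1 * A 1 2 * A 2 0 * A 3 3 - A 0 1 * A 1 2 * A 2 3 * A 3 0
      - A 0 1 * A 1 3 * A 2 0 * A 3 2 + A 0 1 * A 1 3 * A 2 2 * A 3 0
      + A 0 2 * A 1 0 * A 2 1 * A 3 3 - A 0 2 * A 1 0 * A 2 3 * A 3 1
      - A 0 2 * A 1 1 * A 2 0 * A 3 3 + A 0 2 * A 1 1 * A 2 3 * A 3 0
      + A 0 2 * A 1 3 * A 2 0 * A 3 1 - A 0 2 * A 1 3 * A 2 1 * A 3 0
      - A 0 3 * A 1 0 * A 2 1 * A 3 2 + A 0 3 * A 1 0 * A 2 2 * A 3 1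
      + A 0 3 * A 1 1 * A 2 0 * A 3 2 - A 0 3 * A 1 1 * A 2 2 * A 3 0
      - A 0 3 * A 1 2 * A 2 0 * A 3 1 + A 0 3 * A 1 2 * A 2 1 * A 3 0 := by
  rw [Matrix.det_succ_row_zero]
  simp [Fin.sum_univ_succ, Matrix.det_fin_three, Fin.succAbove]
  ring

/-- Let `D₄ ≤ Sym(4)` be generated by the 4-cycle `(1 2 3 4)` and the transposition
`(1 3)`.  Writing the characteristic polynomial of the permutation matrix of `σ` as
`(X - 1)(X³ - s₁X² + s₂X - s₃)`, the polynomial `s₁² - s₁ - s₂ - s₃ - 2` vanishes on all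
of `D₄`, but not on all of `Sym(4)`: its vanishing is a test for `D₄`. -/
theorem kernel_ideal_test_for_D4 :
    (∀ σ ∈ Subgroup.closure {finRotate 4, Equiv.swap (0 : Fin 4) 2},
      ∀ s₁ s₂ s₃ : ℚ,
        (permMatrixQ σ).charpoly = (X - 1) * (X ^ 3 - C s₁ * X ^ 2 + C s₂ * X - C s₃) →
        s₁ ^ 2 - s₁ - s₂ - s₃ - 2 = 0) ∧
    ∃ σ : Equiv.Perm (Fin 4), ∃ s₁ s₂ s₃ : ℚ,
      (permMatrixQ σ).charpoly = (X - 1) * (X ^ 3 - C s₁ * X ^ 2 + C s₂ * X - C s₃) ∧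
      s₁ ^ 2 - s₁ - s₂ - s₃ - 2 ≠ 0 := by
  constructor
  · intro σ hσ s₁ s₂ s₃ h
    have hb := blocks_of_mem hσ
    have h2 : σ 2 = σ 0 + 2 := hb 0
    have h3 : σ 3 = σ 1 + 2 := hb 1
    have n1 : σ 1 ≠ σ 0 := fun e => absurd (σ.injective e) (by decide)
    have n2 : σ 1 ≠ σ 0 + 2 := fun e => absurd (σ.injective (e.trans h2.symm)) (by decide)
    have e0 := congrArg (Polynomial.eval 0) h
    have e1 := congrArg (Polynomial.eval 3) h
    have e2 := congrArg (Polynomial.eval 2) h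
    rw [charpoly_eval4] at e0 e1 e2
    clear h hb hσ
    generalize ha : σ 0 = a at *
    generalize hc : σ 1 = b at *
    fin_cases a <;> fin_cases b <;> first
      | exact absurd rfl n1
      | exact absurd rfl n2
      | (clear n1 n2
         simp [det4, permMatrixQ, ha, hc, h2, h3] at e0 e1 e2
         have t1 : s₁ = 3 ∨ s₁ = 1 ∨ s₁ = -1 := by
           first
             | (left; linarith)
             | (right; left; linarith)
             | (right; right; linarith)
         rcases t1 with rfl | rfl | rfl <;> linarith)
  · refine ⟨Equiv.swap 0 1 * Equiv.swap 1 2, 0, 0, 1, ?_, by norm_num⟩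
    have : permMatrixQ (Equiv.swap (0 : Fin 4) 1 * Equiv.swap 1 2) =
        !![0, 0, 1, 0; 1, 0, 0, 0; 0, 1, 0, 0; 0, 0, 0, 1] := by
      ext i j
      fin_cases i <;> fin_cases j <;> simp [permMatrixQ] <;> decide
    rw [this]
    simp [Matrix.charpoly, Matrix.charmatrix, Matrix.det_succ_row_zero, Fin.sum_univ_succ,
      Fin.succAbove]
    try ring
end

section
/- Let G₀ be the subgroup of Sym(8) generated by (1 2 3 8)(4 5 6 7) and (1 5)(3 7), and let G₁ be the subgroup of Sym(8) generated by (1 3 5 7)(2 4 6 8), (1 4 5 8)(2 3 6 7), and (1 5)(3 7). Then G₀ and G₁ both have order 16, and for every cycle type λ, the number of elements of G₀ with cycle type λ equals the number of elements of G₁ with cycle type λ. In particular the two permutation groups have identical cycle type distributions (probabilities 1/16, 5/16, 1/8, 1/2 on the occurring types). -/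
namespace T8
abbrev P := Equiv.Perm (Fin 8)
def a0 : P := ([0, 1, 2, 7] : List (Fin 8)).formPerm * ([3, 4, 5, 6] : List (Fin 8)).formPerm
def b0 : P := Equiv.swap (0 : Fin 8) 4 * Equiv.swap 2 6
def a1 : P := ([0, 2, 4, 6] : List (Fin 8)).formPerm * ([1, 3, 5, 7] : List (Fin 8)).formPerm
def b1 : P := ([0, 3, 4, 7] : List (Fin 8)).formPerm * ([1, 2, 5, 6] : List (Fin 8)).formPerm
def w (x y z : P) (i : Fin 4 × Fin 2 × Fin 2) : P := x ^ i.1.val * y ^ i.2.1.val * z ^ i.2.2.val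
def f0 : Fin 4 × Fin 2 × Fin 2 → P := w a0 b0 (a0 * b0 * a0⁻¹)
def f1 : Fin 4 × Fin 2 × Fin 2 → P := w a1 b1 b0

lemma inj0 : Function.Injective f0 := by
  unfold Function.Injective; decide +kernel
lemma inj1 : Function.Injective f1 := by
  unfold Function.Injective; decide +kernel
lemma pow_of {f : Fin 4 × Fin 2 × Fin 2 → P} {x : P} (hx : ∀ i, ∃ k, f k = f i * x) (n : ℕ) :
    ∀ i, ∃ k, f k = f i * x ^ n := by
  induction n with
  | zero => exact fun i => ⟨i, by simp⟩
  | succ n ih =>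
    intro i
    obtain ⟨k, hk⟩ := ih i
    obtain ⟨l, hl⟩ := hx k
    exact ⟨l, by rw [hl, hk, pow_succ, mul_assoc]⟩

lemma mul_of {x y z : P} (hx : ∀ i, ∃ k, w x y z k = w x y z i * x)
    (hy : ∀ i, ∃ k, w x y z k = w x y z i * y) (hz : ∀ i, ∃ k, w x y z k = w x y z i * z) :
    ∀ i j, ∃ k, w x y z k = w x y z i * w x y z j := by
  intro i j
  obtain ⟨k, hk⟩ := pow_of hx j.1.val i
  obtain ⟨l, hl⟩ := pow_of hy j.2.1.val k
  obtain ⟨m, hm⟩ := pow_of hz j.2.2.val l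
  exact ⟨m, by rw [hm, hl, hk]; simp only [w, mul_assoc]⟩

lemma mul0 : ∀ i j, ∃ k, f0 k = f0 i * f0 j :=
  mul_of (by decide +kernel) (by decide +kernel) (by decide +kernel)
lemma mul1 : ∀ i j, ∃ k, f1 k = f1 i * f1 j :=
  mul_of (by decide +kernel) (by decide +kernel) (by decide +kernel)
lemma inv0 : ∀ i, ∃ k, f0 k = (f0 i)⁻¹ := by decide +kernel
lemma inv1 : ∀ i, ∃ k, f1 k = (f1 i)⁻¹ := by decide +kernel

/-- Position of a triple in the tables below. -/
def pos (i : Fin 4 × Fin 2 × Fin 2) : ℕ := 4 * i.1.val + 2 * i.2.1.val + i.2.2.val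
/-- A bijection of the index set matching conjugate elements. -/
def p (i : Fin 4 × Fin 2 × Fin 2) : Fin 4 × Fin 2 × Fin 2 :=
  [(0, 0, 0), (2, 0, 1), (0, 0, 1), (2, 1, 1), (1, 1, 1), (3, 0, 1), (0, 1, 0), (3, 0, 0),
   (2, 0, 0), (3, 1, 0), (1, 1, 0), (0, 1, 1), (3, 1, 1), (2, 1, 0), (1, 0, 1),
   (1, 0, 0)].getD (pos i) (0, 0, 0)
def c1 : P := Equiv.swap 3 5 * Equiv.swap 4 6
def c2 : P := ([2, 4, 3] : List (Fin 8)).formPerm * ([5, 6, 7] : List (Fin 8)).formPerm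
def c3 : P := Equiv.swap 1 2 * Equiv.swap 5 6
def c4 : P := Equiv.swap 1 2 * ([3, 6, 4, 5] : List (Fin 8)).formPerm
/-- The conjugating elements. -/
def c (i : Fin 4 × Fin 2 × Fin 2) : P :=
  [1, 1, 1, c2, c2, c4, c1, c2, c2, c3, c3, c2, c2, c1, c4, c2].getD (pos i) 1

lemma p_inj : Function.Injective p := by
  unfold Function.Injective; decide +kernel
lemma conj : ∀ i, c i * f0 i = f1 (p i) * c i := by decide +kernel

lemma ct : (Finset.univ.val.map fun i => (f0 i).cycleType) =
    (Finset.univ.val.map fun i => (f1 i).cycleType) := by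
  have h : ∀ i, (f0 i).cycleType = (f1 (p i)).cycleType := fun i => by
    rw [← mul_inv_eq_iff_eq_mul.mpr (conj i), Equiv.Perm.cycleType_conj]
  have hp : Finset.univ.val.map p = Finset.univ.val :=
    Multiset.map_univ_val_equiv (Equiv.ofBijective p (Finite.injective_iff_bijective.mp p_inj))
  simp only [h]
  conv_rhs => rw [← hp, Multiset.map_map]
  rfl

/-- The subgroup whose underlying set is the range of `f`. -/
def S (f : Fin 4 × Fin 2 × Fin 2 → P) (h1 : ∃ k, f k = 1)
    (hm : ∀ i j, ∃ k, f k = f i * f j) (hi : ∀ i, ∃ k, f k = (f i)⁻¹) : Subgroup P where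
  carrier := Set.range f
  one_mem' := h1
  mul_mem' := by rintro _ _ ⟨i, rfl⟩ ⟨j, rfl⟩; exact hm i j
  inv_mem' := by rintro _ ⟨i, rfl⟩; exact hi i

lemma mem0 (σ : P) : σ ∈ Subgroup.closure {a0, b0} ↔ σ ∈ Set.range f0 := by
  have ha : a0 ∈ Subgroup.closure {a0, b0} := Subgroup.subset_closure (by simp)
  have hb : b0 ∈ Subgroup.closure {a0, b0} := Subgroup.subset_closure (by simp)
  constructor
  · intro h
    have : Subgroup.closure {a0, b0} ≤ S f0 ⟨0, by simp [f0, w]⟩ mul0 inv0 := by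
      rw [Subgroup.closure_le]
      rintro x (rfl | rfl)
      · exact ⟨(1, 0, 0), by simp [f0, w]⟩
      · exact ⟨(0, 1, 0), by simp [f0, w]⟩
    exact this h
  · rintro ⟨i, rfl⟩
    exact mul_mem (mul_mem (pow_mem ha _) (pow_mem hb _))
      (pow_mem (mul_mem (mul_mem ha hb) (inv_mem ha)) _)

lemma mem1 (σ : P) : σ ∈ Subgroup.closure {a1, b1, b0} ↔ σ ∈ Set.range f1 := by
  have ha : a1 ∈ Subgroup.closure {a1, b1, b0} := Subgroup.subset_closure (by simp)
  have hb : b1 ∈ Subgroup.closure {a1, b1, b0} := Subgroup.subset_closure (by simp)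
  have hc : b0 ∈ Subgroup.closure {a1, b1, b0} := Subgroup.subset_closure (by simp)
  constructor
  · intro h
    have : Subgroup.closure {a1, b1, b0} ≤ S f1 ⟨0, by simp [f1, w]⟩ mul1 inv1 := by
      rw [Subgroup.closure_le]
      rintro x (rfl | rfl | rfl)
      · exact ⟨(1, 0, 0), by simp [f1, w]⟩
      · exact ⟨(0, 1, 0), by simp [f1, w]⟩
      · exact ⟨(0, 0, 1), by simp [f1, w]⟩
    exact this h
  · rintro ⟨i, rfl⟩
    exact mul_mem (mul_mem (pow_mem ha _) (pow_mem hb _)) (pow_mem hc _)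

lemma card_of (G : Subgroup P) (f : Fin 4 × Fin 2 × Fin 2 → P) (hf : Function.Injective f)
    (h : ∀ σ, σ ∈ G ↔ σ ∈ Set.range f) : Nat.card G = 16 := by
  have e : Nat.card (Fin 4 × Fin 2 × Fin 2) = Nat.card G :=
    Nat.card_congr (Equiv.ofBijective (fun i => (⟨f i, (h _).2 ⟨i, rfl⟩⟩ : G))
      ⟨fun i j hij => hf (congrArg Subtype.val hij),
       fun ⟨σ, hσ⟩ => by
        obtain ⟨i, rfl⟩ := (h σ).1 hσ
        exact ⟨i, rfl⟩⟩)
  rw [← e]; simp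

lemma count_of (G : Subgroup P) (f : Fin 4 × Fin 2 × Fin 2 → P) (hf : Function.Injective f)
    (h : ∀ σ, σ ∈ G ↔ σ ∈ Set.range f) (lam : Multiset ℕ) :
    Nat.card {σ : P // σ ∈ G ∧ σ.cycleType = lam} =
      (Finset.univ.val.map fun i => (f i).cycleType).count lam := by
  have e : Nat.card {i // lam = (f i).cycleType} =
      Nat.card {σ : P // σ ∈ G ∧ σ.cycleType = lam} :=
    Nat.card_congr (Equiv.ofBijective
      (fun i => (⟨f i.1, (h _).2 ⟨i.1, rfl⟩, i.2.symm⟩ :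
        {σ : P // σ ∈ G ∧ σ.cycleType = lam}))
      ⟨fun i j hij => Subtype.ext (hf (congrArg Subtype.val hij)),
       fun ⟨σ, hσ, hl⟩ => by
        obtain ⟨i, rfl⟩ := (h σ).1 hσ
        exact ⟨⟨i, hl.symm⟩, rfl⟩⟩)
  rw [← e, Multiset.count_map, Nat.card_eq_fintype_card, Fintype.card_subtype]
  rfl
end T8


/-- The transitive groups `8T10` and `8T11`: `G₀ ≤ Sym(8)` generated by
`(1 2 3 8)(4 5 6 7)` and `(1 5)(3 7)`, and `G₁ ≤ Sym(8)` generated by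
`(1 3 5 7)(2 4 6 8)`, `(1 4 5 8)(2 3 6 7)` and `(1 5)(3 7)` (0-based on `Fin 8`),
both have order 16 and identical cycle type distributions: for every cycle type `lam`,
they contain the same number of elements of cycle type `lam`. -/
theorem eq_cycle_type_distributions_8T10_8T11 :
    ∀ G₀ G₁ : Subgroup (Equiv.Perm (Fin 8)),
      G₀ = Subgroup.closure
          {([0, 1, 2, 7] : List (Fin 8)).formPerm * ([3, 4, 5, 6] : List (Fin 8)).formPerm,
           Equiv.swap (0 : Fin 8) 4 * Equiv.swap 2 6} →
      G₁ = Subgroup.closure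
          {([0, 2, 4, 6] : List (Fin 8)).formPerm * ([1, 3, 5, 7] : List (Fin 8)).formPerm,
           ([0, 3, 4, 7] : List (Fin 8)).formPerm * ([1, 2, 5, 6] : List (Fin 8)).formPerm,
           Equiv.swap (0 : Fin 8) 4 * Equiv.swap 2 6} →
      Nat.card G₀ = 16 ∧ Nat.card G₁ = 16 ∧
      ∀ lam : Multiset ℕ,
        Nat.card {σ : Equiv.Perm (Fin 8) // σ ∈ G₀ ∧ σ.cycleType = lam} =
        Nat.card {σ : Equiv.Perm (Fin 8) // σ ∈ G₁ ∧ σ.cycleType = lam} := by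
  rintro G₀ G₁ h₀ h₁
  have m0 : ∀ σ, σ ∈ G₀ ↔ σ ∈ Set.range T8.f0 := by rw [h₀]; exact T8.mem0
  have m1 : ∀ σ, σ ∈ G₁ ↔ σ ∈ Set.range T8.f1 := by rw [h₁]; exact T8.mem1
  refine ⟨T8.card_of _ _ T8.inj0 m0, T8.card_of _ _ T8.inj1 m1, fun lam => ?_⟩
  rw [T8.count_of _ _ T8.inj0 m0, T8.count_of _ _ T8.inj1 m1, T8.ct]
end
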